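/- Let (W, W', N, ∘, ε) be a residuated frame and q an analytic quasiequation. Then W satisfies q if and only if the dual algebra W⁺ satisfies q (as a quasiequation in the language of residuated lattices, under all valuations of variables into W⁺). -/

import Mathlib

/-! For a closed set `Z = Z^{▷◁}`, an inclusion `P ⊆ Z` means that `u N z` for every `u ∈ P` and
every `z ∈ Z^▷`, and `γ` may be dropped from `P` when testing against such a `z`. Using the nuclear
property to peel off one factor at a time, a product `X₁ ∘_γ ⋯ ∘_γ X_k` lies in `{z}^◁` exactly
when `w₁∘⋯∘w_k N z` for all `wᵢ ∈ Xᵢ` (`forall_listCmul_iff`).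

If the frame satisfies the quasiequation, pick `wⱼ ∈ v(xⱼ)` arbitrarily: the premises in `W⁺` give
the premises in the frame, and since the `xⱼ` in the conclusion are distinct, every choice of
factors for the product `v(x₁) ∘_γ ⋯ ∘_γ v(x_m)` comes from such a `w`. Conversely, evaluate in
`W⁺` at `v(xⱼ) = γ({wⱼ})` and `v(y) = {z}^◁`; products of the sets `γ({wⱼ})` lie in `{z}^◁` exactly
when the product of the `wⱼ` is `N`-related to `z` (`forall_listCmul_gam_iff`). -/

/-! A residuated frame satisfies an analytic quasiequation iff its dual algebra does. -/

namespace ResFrames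

variable {W W' A : Type*}

def polR (N : W → W' → Prop) (X : Set W) : Set W' := {z | ∀ x ∈ X, N x z}
def polL (N : W → W' → Prop) (Y : Set W') : Set W := {x | ∀ z ∈ Y, N x z}
def gam (N : W → W' → Prop) (X : Set W) : Set W := polL N (polR N X)
def Closed (N : W → W' → Prop) (X : Set W) : Prop := gam N X = X

structure IsResFrame [Monoid W] (N : W → W' → Prop)
    (lres : W → W' → W') (rres : W' → W → W') : Prop where
  nuclear_l : ∀ (x y : W) (z : W'), N (x * y) z ↔ N y (lres x z)
  nuclear_r : ∀ (x y : W) (z : W'), N (x * y) z ↔ N x (rres z y)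

/-- `X ∘_γ Y  = γ({x∘y | x ∈ X, y ∈ Y})`. -/
def cmul [Monoid W] (N : W → W' → Prop) (X Y : Set W) : Set W :=
  gam N (Set.image2 (· * ·) X Y)

/-- `X ∪_γ Y = γ(X ∪ Y)`. -/
def cjoin (N : W → W' → Prop) (X Y : Set W) : Set W := gam N (X ∪ Y)

/-- `X \ Y = {w | ∀ x ∈ X, x∘w ∈ Y}`. -/
def sld [Monoid W] (X Y : Set W) : Set W := {w | ∀ x ∈ X, x * w ∈ Y}

/-- `Y / X = {w | ∀ x ∈ X, w∘x ∈ Y}`. -/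
def srd [Monoid W] (Y X : Set W) : Set W := {w | ∀ x ∈ X, w * x ∈ Y}

/-- The unit `γ({ε})` of the dual algebra. -/
def cone [Monoid W] (N : W → W' → Prop) : Set W := gam N {1}

/-- `X*`: the set of all finite products of elements of `X`. -/
def starSet [Monoid W] (X : Set W) : Set W := (Submonoid.closure X : Set W)

/-- `X^{*γ} = γ(X*)`. -/
def cstar [Monoid W] (N : W → W' → Prop) (X : Set W) : Set W := gam N (starSet X)

/-- `Xⁿ`: the `n`-fold power of `X` with respect to `∘_γ`, with `X⁰ = γ({ε})`. -/
def gpow [Monoid W] (N : W → W' → Prop) (X : Set W) : ℕ → Set W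
  | 0 => cone N
  | n + 1 => cmul N (gpow N X n) X

variable [Monoid W]

/-- The product of a list of elements of the dual algebra, with respect to
`∘_γ` (empty product `= γ({ε})`, the interpretation of `1`). -/
def listCmul (N : W → W' → Prop) : List (Set W) → Set W
  | [] => cone N
  | X :: l => cmul N X (listCmul N l)

/-- The residuated frame `(W, W', N, ∘, ε)` satisfies the analytic
quasiequation `α₁ ≤ β & ⋯ & αₙ ≤ β ⟹ x₁⋯x_m ≤ β` where the premises are
encoded as lists over `Fin m` (each `p ∈ prems` encodes the product
`αᵢ = x_{p(0)}⋯x_{p(k-1)}`, the empty list encoding `1`): for all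
`w : Fin m → W` and `z : W'`, if `v(αᵢ) N z` for each premise then
`w₁∘⋯∘w_m N z`. -/
def FrameSatAQ (N : W → W' → Prop) (m : ℕ) (prems : List (List (Fin m))) : Prop :=
  ∀ (w : Fin m → W) (z : W'),
    (∀ p ∈ prems, N ((p.map w).prod) z) →
    N (((List.finRange m).map w).prod) z

/-- The dual algebra `W⁺` satisfies the analytic quasiequation (as a
quasiequation in the language of residuated lattices, under all valuations of
the variables `x₁, …, x_m, y` into `W⁺`; products are interpreted by `∘_γ`
and `≤` by `⊆`). -/
def DualSatAQ (N : W → W' → Prop) (m : ℕ) (prems : List (List (Fin m))) : Prop :=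
  ∀ (v : Fin m → Set W), (∀ j, Closed N (v j)) → ∀ Z : Set W, Closed N Z →
    (∀ p ∈ prems, listCmul N (p.map v) ⊆ Z) →
    listCmul N ((List.finRange m).map v) ⊆ Z

omit [Monoid W] in
theorem subset_gam (N : W → W' → Prop) (X : Set W) : X ⊆ gam N X :=
  fun _ hx _ hz => hz _ hx

omit [Monoid W] in
theorem forall_gam_iff (N : W → W' → Prop) (X : Set W) (z : W') :
    (∀ x ∈ gam N X, N x z) ↔ ∀ x ∈ X, N x z :=
  ⟨fun h x hx => h x (subset_gam N X hx), fun h _ hx => hx z h⟩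

omit [Monoid W] in
theorem closed_polL (N : W → W' → Prop) (Y : Set W') : Closed N (polL N Y) :=
  Set.Subset.antisymm (fun _ hx z hz => hx z fun _ hu => hu z hz) (subset_gam N _)

omit [Monoid W] in
theorem closed_gam (N : W → W' → Prop) (X : Set W) : Closed N (gam N X) :=
  closed_polL N _

omit [Monoid W] in
theorem subset_iff_of_closed (N : W → W' → Prop) {X Z : Set W} (hZ : Closed N Z) :
    X ⊆ Z ↔ ∀ z ∈ polR N Z, ∀ x ∈ X, N x z := by
  constructor
  · exact fun h z hz x hx => hz x (h hx)
  · intro h x hx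
    rw [← hZ]
    exact fun z hz => h z hz x hx

theorem forall_cmul_iff (N : W → W' → Prop) (X Y : Set W) (z : W') :
    (∀ u ∈ cmul N X Y, N u z) ↔ ∀ x ∈ X, ∀ y ∈ Y, N (x * y) z := by
  rw [cmul, forall_gam_iff, Set.forall_mem_image2]

theorem forall_cone_iff (N : W → W' → Prop) (z : W') :
    (∀ u ∈ cone N, N u z) ↔ N 1 z := by
  simp [cone, forall_gam_iff]

/-- Membership of a `∘_γ`-product in `{z}^◁` is tested on products of representatives. Only the left
residual is needed: the head of the list is already a plain element, so closure has to be removed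
from the tail only. -/
theorem forall_listCmul_iff {N : W → W' → Prop} {lres : W → W' → W'} {rres : W' → W → W'}
    (hF : IsResFrame N lres rres) (l : List (Set W)) (z : W') :
    (∀ u ∈ listCmul N l, N u z) ↔
      ∀ ws : List W, List.Forall₂ (· ∈ ·) ws l → N ws.prod z := by
  induction l generalizing z with
  | nil => simp [listCmul, forall_cone_iff]
  | cons X l ih =>
    simp only [listCmul, forall_cmul_iff, hF.nuclear_l, ih]
    constructor
    · rintro h _ (_ | ⟨hx, hl⟩)
      rw [List.prod_cons, hF.nuclear_l]
      exact h _ hx _ hl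
    · intro h x hx ws hws
      rw [← hF.nuclear_l, ← List.prod_cons]
      exact h _ (.cons hx hws)

/-- A `∘_γ`-product of closures of singletons lies in `{z}^◁` exactly when the product of their
generators does; here both residuals are used. -/
theorem forall_listCmul_gam_iff {N : W → W' → Prop} {lres : W → W' → W'} {rres : W' → W → W'}
    (hF : IsResFrame N lres rres) {ι : Type*} (w : ι → W) (p : List ι) (z : W') :
    (∀ u ∈ listCmul N (p.map fun j => gam N {w j}), N u z) ↔ N (p.map w).prod z := by
  induction p generalizing z with
  | nil => simp [listCmul, forall_cone_iff]
  | cons j p ih =>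
    -- The left residual reduces to the tail; the right one then isolates the head `γ({w j})`.
    simp only [List.map_cons, listCmul, forall_cmul_iff, hF.nuclear_l, ih, List.prod_cons]
    simp only [← hF.nuclear_l]
    simp [hF.nuclear_r, forall_gam_iff]

/-- a residuated frame satisfies an analytic quasiequation `q`
if and only if its dual algebra `W⁺` satisfies `q`. -/
theorem statement8 (N : W → W' → Prop)
    (lres : W → W' → W') (rres : W' → W → W')
    (hF : IsResFrame N lres rres)
    (m : ℕ) (prems : List (List (Fin m))) :
    FrameSatAQ N m prems ↔ DualSatAQ N m prems := by
  constructor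
  · intro h v _ Z hZ hp
    rw [subset_iff_of_closed N hZ]
    intro z hz
    rw [forall_listCmul_iff hF]
    intro ws hws
    -- Every `xⱼ` occurs exactly once in the conclusion, so `ws` lists the values of some `w`.
    obtain ⟨w, rfl, hw⟩ : ∃ w : Fin m → W, ws = (List.finRange m).map w ∧ ∀ j, w j ∈ v j := by
      have hlen : ws.length = m := by simpa using hws.length_eq
      subst hlen
      refine ⟨ws.get, by simp, fun j => ?_⟩
      simpa using hws.get j.2 (by simp)
    refine h w z fun p hpm => ?_
    refine (forall_listCmul_iff hF _ z).1
      (fun u hu => hz u (hp p hpm hu)) _ ?_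
    rw [List.forall₂_map_left_iff, List.forall₂_map_right_iff, List.forall₂_same]
    exact fun j _ => hw j
  · intro h w z hp
    rw [← forall_listCmul_gam_iff hF]
    intro u hu
    refine h (fun j => gam N {w j}) (fun j => closed_gam N _) (polL N {z}) (closed_polL N _)
      (fun p hpm x hx => ?_) hu z rfl
    rintro _ rfl
    exact (forall_listCmul_gam_iff hF w p _).2 (hp p hpm) x hx

end ResFrames
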